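/- For every n ≥ 1, 8·p_n(1222, 1234) = 8·p_n(1211, 1234) = n⁴ − 6n³ + 19n² − 22n + 16. In particular, the pattern pairs (1222, 1234) and (1211, 1234) are Wilf-equivalent. -/

import Mathlib

/-- A restricted growth function (canonical sequential form of a set partition):
a word over the positive integers whose first letter is 1 and where each letter
is at most one more than the maximum of the preceding letters. -/
def IsRGF (w : List ℕ) : Prop :=
  (∀ x ∈ w, 1 ≤ x) ∧
  (w ≠ [] → w.getD 0 0 = 1) ∧
  ∀ i, i + 1 < w.length → w.getD (i + 1) 0 ≤ ((w.take (i + 1)).foldr max 0) + 1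

/-- Two words of the same length are order-isomorphic: corresponding entries
compare the same way (this preserves equalities as well). -/
def WordOrdIso (s t : List ℕ) : Prop :=
  s.length = t.length ∧
  ∀ i j, i < s.length → j < s.length →
    (s.getD i 0 < s.getD j 0 ↔ t.getD i 0 < t.getD j 0)

/-- `w` contains the pattern `p`: a subsequence of `w` is order-isomorphic to `p`. -/
def PatContains (w p : List ℕ) : Prop := ∃ s : List ℕ, s.Sublist w ∧ WordOrdIso s p

/-- `w` avoids the pattern `p`. -/
def PatAvoids (w p : List ℕ) : Prop := ¬ PatContains w p

/-- `pCount n T` = number of RGFs of length `n` avoiding every pattern in `T`. -/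
noncomputable def pCount (n : ℕ) (T : Set (List ℕ)) : ℕ :=
  {w : List ℕ | IsRGF w ∧ w.length = n ∧ ∀ p ∈ T, PatAvoids w p}.ncard

/-- Restricted growth of a suffix, where `m` is the maximum of the letters already read. -/
def RG : ℕ → List ℕ → Prop
  | _, [] => True
  | m, x :: v => 1 ≤ x ∧ x ≤ m + 1 ∧ RG (max m x) v

lemma RG_iff (v : List ℕ) : ∀ m, RG m v ↔ (∀ x ∈ v, 1 ≤ x) ∧
    ∀ i, i < v.length → v.getD i 0 ≤ max m ((v.take i).foldr max 0) + 1 := by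
  induction v with
  | nil => intro m; simp [RG]
  | cons x v ih =>
    intro m
    simp only [RG, ih]
    constructor
    · rintro ⟨h1, h2, h3, h4⟩
      refine ⟨by simpa using ⟨h1, h3⟩, ?_⟩
      intro i hi
      cases i with
      | zero => simpa using h2
      | succ i =>
        have := h4 i (by simpa using hi)
        simpa [max_assoc] using this
    · rintro ⟨h1, h2⟩
      refine ⟨h1 x (by simp), by simpa using h2 0 (by simp), fun y hy => h1 y (by simp [hy]), ?_⟩
      intro i hi
      have := h2 (i+1) (by simpa using hi)
      simpa [max_assoc] using this

lemma isRGF_iff (w : List ℕ) : IsRGF w ↔ RG 0 w := by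
  rw [RG_iff, IsRGF]
  constructor
  · rintro ⟨h1, h2, h3⟩
    refine ⟨h1, ?_⟩
    intro i hi
    cases i with
    | zero =>
      have : w ≠ [] := by rintro rfl; simp at hi
      rw [h2 this]; simp
    | succ i => simpa using h3 i hi
  · rintro ⟨h1, h2⟩
    refine ⟨h1, ?_, ?_⟩
    · intro h
      cases w with
      | nil => exact absurd rfl h
      | cons x v =>
        have a := h1 x (by simp)
        have b := h2 0 (by simp)
        simp at b ⊢
        omega
    · intro i hi
      simpa using h2 (i+1) hi

lemma RG_sublist (v : List ℕ) : ∀ m k, RG m v → k + m + 1 ∈ v →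
    (List.range' (m+1) (k+1)).Sublist v := by
  induction v with
  | nil => intro m k _ h; simp at h
  | cons x v ih =>
    intro m k h hk
    obtain ⟨h1, h2, h3⟩ := h
    by_cases hx : x = m + 1
    · subst hx
      rw [List.range'_succ]
      apply List.Sublist.cons_cons
      cases k with
      | zero => simp
      | succ k =>
        rw [max_eq_right (by omega)] at h3
        apply ih _ _ h3
        rcases List.mem_cons.1 hk with h | h
        · omega
        · convert h using 1; omega
    · apply List.Sublist.cons
      rw [max_eq_left (by omega)] at h3
      apply ih _ _ h3
      rcases List.mem_cons.1 hk with h | h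
      · omega
      · exact h

lemma avoids1234 (w : List ℕ) (h : RG 0 w) :
    PatAvoids w [1,2,3,4] ↔ ∀ x ∈ w, x ≤ 3 := by
  constructor
  · intro ha x hx
    by_contra hc
    apply ha
    have h1 := RG_sublist w 0 (x-1) h (by convert hx using 1; omega)
    refine ⟨[1,2,3,4], List.Sublist.trans ?_ h1, rfl, fun _ _ _ _ => Iff.rfl⟩
    obtain ⟨y, rfl⟩ : ∃ y, x = y + 4 := ⟨x - 4, by omega⟩
    have : y + 4 - 1 + 1 = y + 1 + 1 + 1 + 1 := by omega
    rw [this]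
    simp [List.range'_succ]
  · rintro ha ⟨s, hs, hl, ho⟩
    have hp := ((RG_iff w 0).1 h).1
    match s, hl with
    | [a, b, c, d], _ =>
      have h1 := (ho 0 1 (by simp) (by simp)).2 (by simp)
      have h2 := (ho 1 2 (by simp) (by simp)).2 (by simp)
      have h3 := (ho 2 3 (by simp) (by simp)).2 (by simp)
      simp at h1 h2 h3
      have := ha d (hs.subset (by simp))
      have := hp a (hs.subset (by simp))
      omega

lemma contains1222 (w : List ℕ) :
    PatContains w [1,2,2,2] ↔ ∃ a b, a < b ∧ [a,b,b,b].Sublist w := by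
  constructor
  · rintro ⟨s, hs, hl, ho⟩
    match s, hl with
    | [a, b, c, d], _ =>
      have h1 := ho 0 1 (by simp) (by simp)
      have h2 := ho 1 2 (by simp) (by simp)
      have h3 := ho 2 1 (by simp) (by simp)
      have h4 := ho 1 3 (by simp) (by simp)
      have h5 := ho 3 1 (by simp) (by simp)
      simp at h1 h2 h3 h4 h5
      obtain rfl : b = c := by omega
      obtain rfl : b = d := by omega
      exact ⟨a, b, h1, hs⟩
  · rintro ⟨a, b, hab, hs⟩
    refine ⟨_, hs, rfl, ?_⟩
    intro i j hi hj
    simp only [List.length_cons, List.length_nil] at hi hj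
    interval_cases i <;> interval_cases j <;> simp <;> omega

lemma contains1211 (w : List ℕ) :
    PatContains w [1,2,1,1] ↔ ∃ a b, a < b ∧ [a,b,a,a].Sublist w := by
  constructor
  · rintro ⟨s, hs, hl, ho⟩
    match s, hl with
    | [a, b, c, d], _ =>
      have h1 := ho 0 1 (by simp) (by simp)
      have h2 := ho 0 2 (by simp) (by simp)
      have h3 := ho 2 0 (by simp) (by simp)
      have h4 := ho 0 3 (by simp) (by simp)
      have h5 := ho 3 0 (by simp) (by simp)
      simp at h1 h2 h3 h4 h5
      obtain rfl : a = c := by omega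
      obtain rfl : a = d := by omega
      exact ⟨a, b, h1, hs⟩
  · rintro ⟨a, b, hab, hs⟩
    refine ⟨_, hs, rfl, ?_⟩
    intro i j hi hj
    simp only [List.length_cons, List.length_nil] at hi hj
    interval_cases i <;> interval_cases j <;> simp <;> omega

/-- Suffixes with letters at most 3 satisfying restricted growth after maximum `m`,
none of whose subsequences is in `L`. -/
def St (m : ℕ) (L : List (List ℕ)) (v : List ℕ) : Prop :=
  RG m v ∧ (∀ x ∈ v, x ≤ 3) ∧ ∀ t ∈ L, ¬ t.Sublist v

lemma full1222 (v : List ℕ) :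
    (IsRGF (1 :: v) ∧ ∀ p ∈ ({[1,2,2,2], [1,2,3,4]} : Set (List ℕ)), PatAvoids (1 :: v) p)
      ↔ St 1 [[2,2,2],[3,3,3]] v := by
  rw [isRGF_iff]
  simp only [Set.mem_insert_iff, Set.mem_singleton_iff, forall_eq_or_imp, forall_eq, St]
  have hR : RG 0 (1 :: v) ↔ RG 1 v := by simp [RG]
  constructor
  · rintro ⟨h1, h2, h3⟩
    rw [avoids1234 _ h1] at h3
    rw [PatAvoids, contains1222] at h2
    refine ⟨hR.1 h1, fun x hx => h3 x (by simp [hx]), ?_⟩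
    simp only [List.mem_cons, List.not_mem_nil, or_false, forall_eq_or_imp, forall_eq]
    exact ⟨fun h => h2 ⟨1, 2, by norm_num, h.cons_cons 1⟩,
      fun h => h2 ⟨1, 3, by norm_num, h.cons_cons 1⟩⟩
  · rintro ⟨h1, h2, h3⟩
    have h0 := hR.2 h1
    refine ⟨h0, ?_, ?_⟩
    · rw [PatAvoids, contains1222]
      rintro ⟨a, b, hab, hs⟩
      have hb : b ∈ 1 :: v := hs.subset (by simp)
      have ha : 1 ≤ a := ((RG_iff _ _).1 h0).1 a (hs.subset (by simp))
      have hs' : [b,b,b].Sublist v := by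
        rw [List.cons_sublist_cons'] at hs
        rcases hs with h | h
        · exact List.sublist_of_cons_sublist h
        · exact h.2
      have hb3 : b ≤ 3 := h2 b (hs'.subset (by simp))
      have : b = 2 ∨ b = 3 := by omega
      rcases this with rfl | rfl
      · exact h3 _ (by simp) hs'
      · exact h3 _ (by simp) hs'
    · rw [avoids1234 _ h0]
      simpa using h2

lemma full1211 (v : List ℕ) :
    (IsRGF (1 :: v) ∧ ∀ p ∈ ({[1,2,1,1], [1,2,3,4]} : Set (List ℕ)), PatAvoids (1 :: v) p)
      ↔ St 1 [[2,1,1],[3,1,1],[2,3,2,2]] v := by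
  rw [isRGF_iff]
  simp only [Set.mem_insert_iff, Set.mem_singleton_iff, forall_eq_or_imp, forall_eq, St]
  have hR : RG 0 (1 :: v) ↔ RG 1 v := by simp [RG]
  constructor
  · rintro ⟨h1, h2, h3⟩
    rw [avoids1234 _ h1] at h3
    rw [PatAvoids, contains1211] at h2
    refine ⟨hR.1 h1, fun x hx => h3 x (by simp [hx]), ?_⟩
    simp only [List.mem_cons, List.not_mem_nil, or_false, forall_eq_or_imp, forall_eq]
    exact ⟨fun h => h2 ⟨1, 2, by norm_num, h.cons_cons 1⟩,
      fun h => h2 ⟨1, 3, by norm_num, h.cons_cons 1⟩,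
      fun h => h2 ⟨2, 3, by norm_num, h.cons 1⟩⟩
  · rintro ⟨h1, h2, h3⟩
    have h0 := hR.2 h1
    have h4 : ∀ x ∈ 1 :: v, x ≤ 3 := by simpa using h2
    refine ⟨h0, ?_, ?_⟩
    · rw [PatAvoids, contains1211]
      rintro ⟨a, b, hab, hs⟩
      have hb3 : b ≤ 3 := h4 b (hs.subset (by simp))
      have ha : 1 ≤ a := ((RG_iff _ _).1 h0).1 a (hs.subset (by simp))
      have : (a = 1 ∧ b = 2) ∨ (a = 1 ∧ b = 3) ∨ (a = 2 ∧ b = 3) := by omega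
      rw [List.cons_sublist_cons'] at hs
      rcases this with ⟨rfl, rfl⟩ | ⟨rfl, rfl⟩ | ⟨rfl, rfl⟩
      · exact h3 [2,1,1] (by simp) (hs.elim List.sublist_of_cons_sublist And.right)
      · exact h3 [3,1,1] (by simp) (hs.elim List.sublist_of_cons_sublist And.right)
      · exact h3 [2,3,2,2] (by simp) (hs.elim id (fun h => absurd h.1 (by norm_num)))
    · rw [avoids1234 _ h0]
      exact h4

open Classical in
/-- Number of words of length `n` over `{1,2,3}` satisfying `P`. -/
noncomputable def cnt : (List ℕ → Prop) → ℕ → ℕ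
  | P, 0 => if P [] then 1 else 0
  | P, n + 1 => cnt (fun v => P (1 :: v)) n + cnt (fun v => P (2 :: v)) n
      + cnt (fun v => P (3 :: v)) n

lemma cnt_eq (n : ℕ) : ∀ P : List ℕ → Prop, (∀ v, P v → ∀ x ∈ v, 1 ≤ x ∧ x ≤ 3) →
    {v | P v ∧ v.length = n}.Finite ∧ {v | P v ∧ v.length = n}.ncard = cnt P n := by
  induction n with
  | zero =>
    intro P _
    by_cases h : P []
    · have : {v | P v ∧ v.length = 0} = {[]} := by
        ext v
        simp only [List.length_eq_zero_iff, Set.mem_ofPred_eq, Set.mem_singleton_iff]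
        exact ⟨And.right, by rintro rfl; exact ⟨h, rfl⟩⟩
      rw [this]
      simp [cnt, h]
    · have : {v | P v ∧ v.length = 0} = ∅ := by
        ext v
        simp only [List.length_eq_zero_iff, Set.mem_ofPred_eq, Set.mem_empty_iff_false, iff_false]
        rintro ⟨a, rfl⟩; exact h a
      rw [this]
      simp [cnt, h]
  | succ n ih =>
    intro P hP
    have key : ∀ a, {v | P (a :: v) ∧ v.length = n}.Finite ∧
        {v | P (a :: v) ∧ v.length = n}.ncard = cnt (fun v => P (a :: v)) n := fun a =>
      ih (fun v => P (a :: v)) (fun v hv x hx => hP _ hv x (by simp [hx]))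
    set A : ℕ → Set (List ℕ) := fun a => {v | P (a :: v) ∧ v.length = n} with hA
    have hU : {v | P v ∧ v.length = n + 1} =
        (Set.image (List.cons 1) (A 1) ∪ Set.image (List.cons 2) (A 2)) ∪ Set.image (List.cons 3) (A 3) := by
      ext w
      simp only [hA, Set.mem_union, Set.mem_image, Set.mem_ofPred_eq]
      constructor
      · rintro ⟨h1, h2⟩
        cases w with
        | nil => simp at h2
        | cons x v =>
          have hx := hP _ h1 x (by simp)
          have hl : v.length = n := by simpa using h2
          have : x = 1 ∨ x = 2 ∨ x = 3 := by omega
          rcases this with rfl | rfl | rfl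
          · exact Or.inl (Or.inl ⟨v, ⟨h1, hl⟩, rfl⟩)
          · exact Or.inl (Or.inr ⟨v, ⟨h1, hl⟩, rfl⟩)
          · exact Or.inr ⟨v, ⟨h1, hl⟩, rfl⟩
      · rintro ((⟨v, ⟨h, hl⟩, rfl⟩ | ⟨v, ⟨h, hl⟩, rfl⟩) | ⟨v, ⟨h, hl⟩, rfl⟩) <;>
          exact ⟨h, by simp [hl]⟩
    have f : ∀ a, (Set.image (List.cons a) (A a)).Finite := fun a => (key a).1.image _
    have c : ∀ a, (Set.image (List.cons a) (A a)).ncard = cnt (fun v => P (a :: v)) n := fun a => by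
      rw [Set.ncard_image_of_injective _ List.cons_injective]; exact (key a).2
    rw [hU]
    refine ⟨((f 1).union (f 2)).union (f 3), ?_⟩
    rw [Set.ncard_union_eq _ ((f 1).union (f 2)) (f 3), Set.ncard_union_eq _ (f 1) (f 2),
      c, c, c, cnt]
    · rw [Set.disjoint_left]
      rintro _ ⟨v, _, rfl⟩ ⟨u, _, h⟩
      simp at h
    · rw [Set.disjoint_left]
      rintro _ (⟨v, _, rfl⟩ | ⟨v, _, rfl⟩) ⟨u, _, h⟩ <;> simp at h

lemma cnt_false (n : ℕ) : cnt (fun _ => False) n = 0 := by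
  induction n with
  | zero => simp [cnt]
  | succ n ih => simp [cnt, ih]

lemma cnt_step {P P1 P2 P3 : List ℕ → Prop} (h1 : ∀ v, P (1 :: v) ↔ P1 v)
    (h2 : ∀ v, P (2 :: v) ↔ P2 v) (h3 : ∀ v, P (3 :: v) ↔ P3 v) (n : ℕ) :
    cnt P (n + 1) = cnt P1 n + cnt P2 n + cnt P3 n := by
  simp only [cnt, h1, h2, h3]

lemma pCount_eq (T : Set (List ℕ)) (Q : List ℕ → Prop)
    (hQ : ∀ v, (IsRGF (1 :: v) ∧ ∀ p ∈ T, PatAvoids (1 :: v) p) ↔ Q v)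
    (hb : ∀ v, Q v → ∀ x ∈ v, 1 ≤ x ∧ x ≤ 3) (n : ℕ) : pCount (n + 1) T = cnt Q n := by
  rw [← (cnt_eq n Q hb).2, pCount,
    ← Set.ncard_image_of_injective {v | Q v ∧ v.length = n} (List.cons_injective (a := 1))]
  congr 1
  ext w
  simp only [Set.mem_image, Set.mem_ofPred_eq, ← hQ]
  constructor
  · rintro ⟨h1, h2, h3⟩
    cases w with
    | nil => simp at h2
    | cons x v =>
      have : x = 1 := by simpa using h1.2.1 (by simp)
      subst this
      exact ⟨v, ⟨⟨h1, h3⟩, by simpa using h2⟩, rfl⟩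
  · rintro ⟨v, ⟨⟨h1, h3⟩, h2⟩, rfl⟩
    exact ⟨h1, by simp [h2], h3⟩

lemma St_bound (m : ℕ) (L : List (List ℕ)) (v : List ℕ) (h : St m L v) :
    ∀ x ∈ v, 1 ≤ x ∧ x ≤ 3 :=
  fun x hx => ⟨((RG_iff v m).1 h.1).1 x hx, h.2.1 x hx⟩

/-- Both families of suffix predicates are states of the same automaton (up to relabelling of the
letters), whose counts are determined here. -/
lemma solve (a b c d e f g : ℕ → ℕ)
    (a0 : a 0 = 1) (b0 : b 0 = 1) (c0 : c 0 = 1) (d0 : d 0 = 1) (e0 : e 0 = 1) (f0 : f 0 = 1)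
    (g0 : g 0 = 1)
    (ha : ∀ n, a (n+1) = a n + b n) (hb : ∀ n, b (n+1) = b n + c n + d n)
    (hc : ∀ n, c (n+1) = c n + e n) (hd : ∀ n, d (n+1) = d n + e n + f n)
    (he : ∀ n, e (n+1) = e n + g n) (hf : ∀ n, f (n+1) = f n + g n)
    (hg : ∀ n, g (n+1) = g n) (n : ℕ) :
    (8 * a n : ℤ) = (n:ℤ)^4 - 2*(n:ℤ)^3 + 7*(n:ℤ)^2 + 2*n + 8 := by
  have G : ∀ n, g n = 1 := fun n => by
    induction n with
    | zero => exact g0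
    | succ n ih => rw [hg, ih]
  have E : ∀ n, e n = n + 1 := fun n => by
    induction n with
    | zero => exact e0
    | succ n ih => rw [he, ih, G]
  have F : ∀ n, f n = n + 1 := fun n => by
    induction n with
    | zero => exact f0
    | succ n ih => rw [hf, ih, G]
  have D : ∀ n, d n = n ^ 2 + n + 1 := fun n => by
    induction n with
    | zero => simp [d0]
    | succ n ih => rw [hd, ih, E, F]; ring
  have C : ∀ n, 2 * c n = n ^ 2 + n + 2 := fun n => by
    induction n with
    | zero => simp [c0]
    | succ n ih => rw [hc, mul_add, ih, E]; ring
  have B : ∀ n, 2 * b n = n ^ 3 + 3 * n + 2 := fun n => by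
    induction n with
    | zero => simp [b0]
    | succ n ih => rw [hb, mul_add, mul_add, ih, C, D]; ring
  induction n with
  | zero => simp [a0]
  | succ n ih =>
    have h := B n
    zify at h
    rw [ha]
    push_cast
    linear_combination ih + 4 * h

lemma count1222 (n : ℕ) : (8 * cnt (St 1 [[2,2,2],[3,3,3]]) n : ℤ)
    = (n:ℤ)^4 - 2*(n:ℤ)^3 + 7*(n:ℤ)^2 + 2*n + 8 := by
  have Z := cnt_false
  refine solve _ (cnt (St 2 [[2,2],[3,3,3]])) (cnt (St 2 [[2],[3,3,3]])) (cnt (St 3 [[2,2],[3,3]]))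
    (cnt (St 3 [[2],[3,3]])) (cnt (St 3 [[2,2],[3]])) (cnt (St 3 [[2],[3]]))
    ?_ ?_ ?_ ?_ ?_ ?_ ?_ ?_ ?_ ?_ ?_ ?_ ?_ ?_ n
  iterate 7 simp [cnt, St, RG]
  all_goals intro n
  · rw [cnt_step (P1 := St 1 [[2,2,2],[3,3,3]]) (P2 := St 2 [[2,2],[3,3,3]]) (P3 := fun _ => False)]
    · rw [Z]; ring
    all_goals
      intro v
      simp only [St, RG, List.mem_cons, List.not_mem_nil, or_false, forall_eq_or_imp,
        forall_eq, List.cons_sublist_cons']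
      norm_num
      try grind [List.sublist_of_cons_sublist]
  · rw [cnt_step (P1 := St 2 [[2,2],[3,3,3]]) (P2 := St 2 [[2],[3,3,3]]) (P3 := St 3 [[2,2],[3,3]])]
    all_goals
      intro v
      simp only [St, RG, List.mem_cons, List.not_mem_nil, or_false, forall_eq_or_imp,
        forall_eq, List.cons_sublist_cons']
      norm_num
      try grind [List.sublist_of_cons_sublist]
  · rw [cnt_step (P1 := St 2 [[2],[3,3,3]]) (P2 := fun _ => False) (P3 := St 3 [[2],[3,3]])]
    · rw [Z]; ring
    all_goals
      intro v
      simp only [St, RG, List.mem_cons, List.not_mem_nil, or_false, forall_eq_or_imp,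
        forall_eq, List.cons_sublist_cons']
      norm_num
      try grind [List.sublist_of_cons_sublist]
  · rw [cnt_step (P1 := St 3 [[2,2],[3,3]]) (P2 := St 3 [[2],[3,3]]) (P3 := St 3 [[2,2],[3]])]
    all_goals
      intro v
      simp only [St, RG, List.mem_cons, List.not_mem_nil, or_false, forall_eq_or_imp,
        forall_eq, List.cons_sublist_cons']
      norm_num
      try grind [List.sublist_of_cons_sublist]
  · rw [cnt_step (P1 := St 3 [[2],[3,3]]) (P2 := fun _ => False) (P3 := St 3 [[2],[3]])]
    · rw [Z]; ring
    all_goals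
      intro v
      simp only [St, RG, List.mem_cons, List.not_mem_nil, or_false, forall_eq_or_imp,
        forall_eq, List.cons_sublist_cons']
      norm_num
      try grind [List.sublist_of_cons_sublist]
  · rw [cnt_step (P1 := St 3 [[2,2],[3]]) (P2 := St 3 [[2],[3]]) (P3 := fun _ => False)]
    · rw [Z]; ring
    all_goals
      intro v
      simp only [St, RG, List.mem_cons, List.not_mem_nil, or_false, forall_eq_or_imp,
        forall_eq, List.cons_sublist_cons']
      norm_num
      try grind [List.sublist_of_cons_sublist]
  · rw [cnt_step (P1 := St 3 [[2],[3]]) (P2 := fun _ => False) (P3 := fun _ => False)]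
    · simp [Z]
    all_goals
      intro v
      simp only [St, RG, List.mem_cons, List.not_mem_nil, or_false, forall_eq_or_imp,
        forall_eq, List.cons_sublist_cons']
      norm_num
      try grind [List.sublist_of_cons_sublist]

lemma count1211 (n : ℕ) : (8 * cnt (St 1 [[2,1,1],[3,1,1],[2,3,2,2]]) n : ℤ)
    = (n:ℤ)^4 - 2*(n:ℤ)^3 + 7*(n:ℤ)^2 + 2*n + 8 := by
  have Z := cnt_false
  refine solve _ (cnt (St 2 [[1,1],[3,2,2]])) (cnt (St 2 [[1],[3,2,2]])) (cnt (St 3 [[1,1],[2,2]]))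
    (cnt (St 3 [[1],[2,2]])) (cnt (St 3 [[1,1],[2]])) (cnt (St 3 [[1],[2]]))
    ?_ ?_ ?_ ?_ ?_ ?_ ?_ ?_ ?_ ?_ ?_ ?_ ?_ ?_ n
  iterate 7 simp [cnt, St, RG]
  all_goals intro n
  · rw [cnt_step (P1 := St 1 [[2,1,1],[3,1,1],[2,3,2,2]]) (P2 := St 2 [[1,1],[3,2,2]])
      (P3 := fun _ => False)]
    · rw [Z]; ring
    all_goals
      intro v
      simp only [St, RG, List.mem_cons, List.not_mem_nil, or_false, forall_eq_or_imp,
        forall_eq, List.cons_sublist_cons']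
      norm_num
      try grind [List.sublist_of_cons_sublist]
  · rw [cnt_step (P1 := St 2 [[1],[3,2,2]]) (P2 := St 2 [[1,1],[3,2,2]]) (P3 := St 3 [[1,1],[2,2]])]
    · ring
    all_goals
      intro v
      simp only [St, RG, List.mem_cons, List.not_mem_nil, or_false, forall_eq_or_imp,
        forall_eq, List.cons_sublist_cons']
      norm_num
      try grind [List.sublist_of_cons_sublist]
  · rw [cnt_step (P1 := fun _ => False) (P2 := St 2 [[1],[3,2,2]]) (P3 := St 3 [[1],[2,2]])]
    · rw [Z]; ring
    all_goals
      intro v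
      simp only [St, RG, List.mem_cons, List.not_mem_nil, or_false, forall_eq_or_imp,
        forall_eq, List.cons_sublist_cons']
      norm_num
      try grind [List.sublist_of_cons_sublist]
  · rw [cnt_step (P1 := St 3 [[1],[2,2]]) (P2 := St 3 [[1,1],[2]]) (P3 := St 3 [[1,1],[2,2]])]
    · ring
    all_goals
      intro v
      simp only [St, RG, List.mem_cons, List.not_mem_nil, or_false, forall_eq_or_imp,
        forall_eq, List.cons_sublist_cons']
      norm_num
      try grind [List.sublist_of_cons_sublist]
  · rw [cnt_step (P1 := fun _ => False) (P2 := St 3 [[1],[2]]) (P3 := St 3 [[1],[2,2]])]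
    · rw [Z]; ring
    all_goals
      intro v
      simp only [St, RG, List.mem_cons, List.not_mem_nil, or_false, forall_eq_or_imp,
        forall_eq, List.cons_sublist_cons']
      norm_num
      try grind [List.sublist_of_cons_sublist]
  · rw [cnt_step (P1 := St 3 [[1],[2]]) (P2 := fun _ => False) (P3 := St 3 [[1,1],[2]])]
    · rw [Z]; ring
    all_goals
      intro v
      simp only [St, RG, List.mem_cons, List.not_mem_nil, or_false, forall_eq_or_imp,
        forall_eq, List.cons_sublist_cons']
      norm_num
      try grind [List.sublist_of_cons_sublist]
  · rw [cnt_step (P1 := fun _ => False) (P2 := fun _ => False) (P3 := St 3 [[1],[2]])]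
    · simp [Z]
    all_goals
      intro v
      simp only [St, RG, List.mem_cons, List.not_mem_nil, or_false, forall_eq_or_imp,
        forall_eq, List.cons_sublist_cons']
      norm_num
      try grind [List.sublist_of_cons_sublist]

/-- Corollary 4.13: `p_n(1222,1234) = p_n(1211,1234) = (n⁴-6n³+19n²-22n+16)/8`. -/
theorem stmt17 :
    ∀ n : ℕ, 1 ≤ n →
      pCount n {[1,2,2,2], [1,2,3,4]} = pCount n {[1,2,1,1], [1,2,3,4]} ∧
      (8 * pCount n {[1,2,2,2], [1,2,3,4]} : ℤ)
        = (n : ℤ) ^ 4 - 6 * (n : ℤ) ^ 3 + 19 * (n : ℤ) ^ 2 - 22 * (n : ℤ) + 16 := by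
  intro n hn
  obtain ⟨m, rfl⟩ : ∃ m, n = m + 1 := ⟨n - 1, by omega⟩
  have h1 := pCount_eq _ _ full1222 (St_bound _ _) m
  have h2 := pCount_eq _ _ full1211 (St_bound _ _) m
  have h3 := count1222 m
  have h4 := count1211 m
  rw [h1, h2]
  refine ⟨by omega, ?_⟩
  rw [h3]
  push_cast
  ring
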